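/- Fix d ∈ ℕ, a smooth function U : ℝ^d → ℝ with ‖∇²U‖_∞ < ∞, and a constant σ > 0, and let L be the kinetic Langevin operator L h = −y·∇_x h + (∇U(x) − y/σ)·∇_y h + Δ_y h. Then for every smooth h : ℝ^d × ℝ^d → (0,∞), pointwise on ℝ^d × ℝ^d, (1/2)[ L(|∇h|²/h) − ( 2∇h·∇(Lh)/h − |∇h|² Lh/h² ) ] ≥ −(‖∇²U‖_∞ + 1 + 1/σ) |∇h|²/h, where ∇ = (∇_x, ∇_y) is the full gradient in the 2d variables. -/

import Mathlib

noncomputable section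

open scoped BigOperators

open scoped BigOperators

/-- Partial derivative in the `i`-th `x`-direction of `f : ℝ^d × ℝ^d → ℝ`. -/
def pdx {d : ℕ} (i : Fin d) (f : (Fin d → ℝ) × (Fin d → ℝ) → ℝ)
    (z : (Fin d → ℝ) × (Fin d → ℝ)) : ℝ :=
  fderiv ℝ f z (Pi.single i (1 : ℝ), 0)

/-- Partial derivative in the `i`-th `y`-direction of `f : ℝ^d × ℝ^d → ℝ`. -/
def pdy {d : ℕ} (i : Fin d) (f : (Fin d → ℝ) × (Fin d → ℝ) → ℝ)
    (z : (Fin d → ℝ) × (Fin d → ℝ)) : ℝ :=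
  fderiv ℝ f z (0, Pi.single i (1 : ℝ))

/-- `i`-th component of `∇U`. -/
def gradU {d : ℕ} (U : (Fin d → ℝ) → ℝ) (i : Fin d) (x : Fin d → ℝ) : ℝ :=
  fderiv ℝ U x (Pi.single i (1 : ℝ))

/-- `(i,j)` entry of the Hessian matrix `∇²U`. -/
def hessU {d : ℕ} (U : (Fin d → ℝ) → ℝ) (i j : Fin d) (x : Fin d → ℝ) : ℝ :=
  fderiv ℝ (fun u => fderiv ℝ U u (Pi.single j (1 : ℝ))) x (Pi.single i (1 : ℝ))

/-- The kinetic Langevin operator `L h = −y·∇ₓh + (∇U(x) − y/σ)·∇_y h + Δ_y h`. -/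
def langevin {d : ℕ} (U : (Fin d → ℝ) → ℝ) (σ : ℝ)
    (f : (Fin d → ℝ) × (Fin d → ℝ) → ℝ) (z : (Fin d → ℝ) × (Fin d → ℝ)) : ℝ :=
  (∑ i, -(z.2 i) * pdx i f z)
    + (∑ i, (gradU U i z.1 - z.2 i / σ) * pdy i f z)
    + ∑ i, pdy i (fun w => pdy i f w) z

/-- The supremum over x of the Frobenius norm of the Hessian of U, i.e. ‖∇²U‖_∞. -/
def hessNormInf {d : ℕ} (U : (Fin d → ℝ) → ℝ) : ℝ :=
  ⨆ x : Fin d → ℝ, Real.sqrt (∑ i, ∑ j, (hessU U i j x) ^ 2)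


section helpers

variable {d : ℕ}

/-- Directional derivative along `v`. -/
def dird {E : Type*} [NormedAddCommGroup E] [NormedSpace ℝ E] (v : E) (f : E → ℝ) (z : E) : ℝ :=
  fderiv ℝ f z v

section generic
variable {E : Type*} [NormedAddCommGroup E] [NormedSpace ℝ E]

theorem dird_smooth (v : E) {f : E → ℝ} (hf : ContDiff ℝ (⊤ : ℕ∞) f) :
    ContDiff ℝ (⊤ : ℕ∞) (dird v f) := by
  have h1 : ContDiff ℝ (⊤ : ℕ∞) (fderiv ℝ f) := hf.fderiv_right (by simp)
  exact h1.clm_apply contDiff_const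

theorem smooth_diff {f : E → ℝ} (hf : ContDiff ℝ (⊤ : ℕ∞) f) : Differentiable ℝ f :=
  hf.differentiable (by simp)

theorem dird_add (v : E) {f g : E → ℝ} (hf : Differentiable ℝ f) (hg : Differentiable ℝ g) (z : E) :
    dird v (fun w => f w + g w) z = dird v f z + dird v g z := by
  unfold dird
  rw [fderiv_fun_add (hf z) (hg z)]; rfl

theorem dird_mul (v : E) {f g : E → ℝ} (hf : Differentiable ℝ f) (hg : Differentiable ℝ g) (z : E) :
    dird v (fun w => f w * g w) z = f z * dird v g z + dird v f z * g z := by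
  unfold dird
  rw [fderiv_fun_mul (hf z) (hg z)]
  simp [mul_comm]

theorem dird_sum {ι : Type*} (s : Finset ι) (v : E) {f : ι → E → ℝ}
    (hf : ∀ i, Differentiable ℝ (f i)) (z : E) :
    dird v (fun w => ∑ i ∈ s, f i w) z = ∑ i ∈ s, dird v (f i) z := by
  unfold dird
  rw [fderiv_fun_sum (fun i _ => hf i z)]
  simp

theorem dird_inv (v : E) {f : E → ℝ} (hf : Differentiable ℝ f) (hp : ∀ z, 0 < f z) (z : E) :
    dird v (fun w => (f w)⁻¹) z = - dird v f z * ((f z)⁻¹ * (f z)⁻¹) := by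
  unfold dird
  have := (hasDerivAt_inv (hp z).ne').comp_hasFDerivAt z (hf z).hasFDerivAt
  have h2 := this.fderiv
  have h3 : (fun w => (f w)⁻¹) = (fun y => y⁻¹) ∘ f := rfl
  rw [h3, h2]
  simp; ring

theorem dird_comm (v u : E) {f : E → ℝ} (hf : ContDiff ℝ (⊤ : ℕ∞) f) (z : E) :
    dird v (dird u f) z = dird u (dird v f) z := by
  have h1 : ContDiff ℝ (⊤ : ℕ∞) (fderiv ℝ f) := hf.fderiv_right (by simp)
  have hd : DifferentiableAt ℝ (fderiv ℝ f) z := h1.differentiable (by simp) z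
  have key : ∀ a b : E, dird a (dird b f) z = fderiv ℝ (fderiv ℝ f) z a b := by
    intro a b
    change fderiv ℝ (fun w => fderiv ℝ f w b) z a = _
    rw [fderiv_clm_apply hd (differentiableAt_const b)]
    simp
  rw [key, key]
  have hs : IsSymmSndFDerivAt ℝ f z := by
    apply ContDiffAt.isSymmSndFDerivAt hf.contDiffAt
    simp only [minSmoothness_of_isRCLikeNormedField]
    exact WithTop.coe_le_coe.2 (le_top : (2 : ℕ∞) ≤ ⊤)
  exact hs v u

theorem dird_quot (v : E) {g h : E → ℝ} (hg : Differentiable ℝ g) (hh : Differentiable ℝ h)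
    (hp : ∀ z, 0 < h z) (z : E) :
    dird v (fun w => (g w) ^ 2 * (h w)⁻¹) z
      = 2 * (g z * dird v g z * (h z)⁻¹) - g z ^ 2 * (dird v h z * ((h z)⁻¹ * (h z)⁻¹)) := by
  have hi : Differentiable ℝ (fun w => (h w)⁻¹) := hh.fun_inv (fun z => (hp z).ne')
  have e : (fun w => (g w) ^ 2 * (h w)⁻¹) = fun w => (g w * g w) * (h w)⁻¹ := by
    funext w; ring
  rw [e, dird_mul v (hg.fun_mul hg) hi, dird_inv v hh hp, dird_mul v hg hg]
  ring

theorem dird_quot2 (v : E) {g h : E → ℝ} (hg : ContDiff ℝ (⊤ : ℕ∞) g) (hh : ContDiff ℝ (⊤ : ℕ∞) h)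
    (hp : ∀ z, 0 < h z) (z : E) :
    dird v (dird v (fun w => (g w) ^ 2 * (h w)⁻¹)) z
      = 2 * (g z * dird v (dird v g) z * (h z)⁻¹)
        - g z ^ 2 * (dird v (dird v h) z * ((h z)⁻¹ * (h z)⁻¹))
        + 2 * (h z)⁻¹ * (dird v g z - g z * dird v h z * (h z)⁻¹) ^ 2 := by
  have dg := smooth_diff hg
  have dh := smooth_diff hh
  have dg' := smooth_diff (dird_smooth v hg)
  have dh' := smooth_diff (dird_smooth v hh)
  have hi : Differentiable ℝ (fun w => (h w)⁻¹) := dh.fun_inv (fun z => (hp z).ne')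
  have e : dird v (fun w => (g w) ^ 2 * (h w)⁻¹) = fun w =>
      ((2 * g w) * dird v g w) * (h w)⁻¹
        + (((-1) * (g w * g w)) * dird v h w) * ((h w)⁻¹ * (h w)⁻¹) := by
    funext w; rw [dird_quot v dg dh hp]; ring
  have hc : ∀ c : ℝ, Differentiable ℝ (fun _ : E => c) := fun c => differentiable_const c
  have hc0 : ∀ c : ℝ, dird v (fun _ : E => c) z = 0 := by intro c; simp [dird]
  rw [e, dird_add v (by fun_prop) (by fun_prop), dird_mul v (by fun_prop) hi,
    dird_mul v (by fun_prop) dg', dird_mul v (hc 2) dg,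
    dird_mul v (by fun_prop) (by fun_prop), dird_mul v (by fun_prop) dh',
    dird_mul v (hc (-1)) (by fun_prop), dird_mul v dg dg, dird_mul v hi hi, dird_inv v dh hp,
    hc0, hc0]
  ring

end generic

theorem pdx_eq (i : Fin d) : pdx i = dird ((Pi.single i (1 : ℝ), 0) : (Fin d → ℝ) × (Fin d → ℝ)) := rfl
theorem pdy_eq (i : Fin d) : pdy i = dird ((0, Pi.single i (1 : ℝ)) : (Fin d → ℝ) × (Fin d → ℝ)) := rfl

theorem langevin_eq (U : (Fin d → ℝ) → ℝ) (σ : ℝ) (f : (Fin d → ℝ) × (Fin d → ℝ) → ℝ)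
    (z : (Fin d → ℝ) × (Fin d → ℝ)) : langevin U σ f z =
  ∑ i, (-(z.2 i) * pdx i f z + (gradU U i z.1 - z.2 i / σ) * pdy i f z + pdy i (pdy i f) z) := by
  simp only [Finset.sum_add_distrib]; rfl

theorem langevin_add (U : (Fin d → ℝ) → ℝ) (σ : ℝ) {f g : (Fin d → ℝ) × (Fin d → ℝ) → ℝ}
    (hf : ContDiff ℝ (⊤ : ℕ∞) f) (hg : ContDiff ℝ (⊤ : ℕ∞) g) (z : (Fin d → ℝ) × (Fin d → ℝ)) :
    langevin U σ (fun w => f w + g w) z = langevin U σ f z + langevin U σ g z := by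
  simp only [langevin_eq, ← Finset.sum_add_distrib, pdx_eq, pdy_eq]
  refine Finset.sum_congr rfl fun i _ => ?_
  have e : ∀ v, dird v (fun w => f w + g w) = fun w => dird v f w + dird v g w := fun v =>
    funext fun w => dird_add v (smooth_diff hf) (smooth_diff hg) w
  simp only [e]
  rw [dird_add _ (smooth_diff (dird_smooth _ hf)) (smooth_diff (dird_smooth _ hg))]
  ring

theorem langevin_sum (U : (Fin d → ℝ) → ℝ) (σ : ℝ) {ι : Type*} (s : Finset ι)
    {f : ι → (Fin d → ℝ) × (Fin d → ℝ) → ℝ}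
    (hf : ∀ i, ContDiff ℝ (⊤ : ℕ∞) (f i)) (z : (Fin d → ℝ) × (Fin d → ℝ)) :
    langevin U σ (fun w => ∑ i ∈ s, f i w) z = ∑ i ∈ s, langevin U σ (f i) z := by
  classical
  induction s using Finset.induction_on with
  | empty =>
    have e : ∀ v : (Fin d → ℝ) × (Fin d → ℝ), dird v (fun _ => (0 : ℝ)) = fun _ => 0 := by
      intro v; funext w; simp [dird]
    simp [langevin_eq, pdx_eq, pdy_eq, e]
  | insert a s ha ih =>
    simp only [Finset.sum_insert ha]
    rw [langevin_add U σ (hf a) (ContDiff.sum fun i _ => hf i), ih]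

theorem langevin_quot (U : (Fin d → ℝ) → ℝ) (σ : ℝ) {g h : (Fin d → ℝ) × (Fin d → ℝ) → ℝ}
    (hg : ContDiff ℝ (⊤ : ℕ∞) g) (hh : ContDiff ℝ (⊤ : ℕ∞) h)
    (hp : ∀ z, 0 < h z) (z : (Fin d → ℝ) × (Fin d → ℝ)) :
    2 * (g z * langevin U σ g z * (h z)⁻¹) - g z ^ 2 * (langevin U σ h z * ((h z)⁻¹ * (h z)⁻¹))
      ≤ langevin U σ (fun w => (g w) ^ 2 * (h w)⁻¹) z := by
  have key : langevin U σ (fun w => (g w) ^ 2 * (h w)⁻¹) z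
      = 2 * (g z * langevin U σ g z * (h z)⁻¹)
        - g z ^ 2 * (langevin U σ h z * ((h z)⁻¹ * (h z)⁻¹))
        + ∑ i, 2 * (h z)⁻¹ * (pdy i g z - g z * pdy i h z * (h z)⁻¹) ^ 2 := by
    simp only [langevin_eq, Finset.mul_sum, Finset.sum_mul, ← Finset.sum_add_distrib,
      ← Finset.sum_sub_distrib, pdx_eq, pdy_eq]
    refine Finset.sum_congr rfl fun i _ => ?_
    rw [dird_quot2 _ hg hh hp, dird_quot _ (smooth_diff hg) (smooth_diff hh) hp,
      dird_quot _ (smooth_diff hg) (smooth_diff hh) hp]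
    ring
  have : 0 ≤ ∑ i, 2 * (h z)⁻¹ * (pdy i g z - g z * pdy i h z * (h z)⁻¹) ^ 2 :=
    Finset.sum_nonneg fun i _ => by
      have := hp z
      positivity
  linarith

/-- smoothness of the drift coefficient -/
theorem gradU_smooth {U : (Fin d → ℝ) → ℝ} (hU : ContDiff ℝ (⊤ : ℕ∞) U) (j : Fin d) :
    ContDiff ℝ (⊤ : ℕ∞) (gradU U j) := dird_smooth (Pi.single j (1 : ℝ) : Fin d → ℝ) hU

theorem dird_langevin {U : (Fin d → ℝ) → ℝ} (hU : ContDiff ℝ (⊤ : ℕ∞) U) (σ : ℝ)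
    {h : (Fin d → ℝ) × (Fin d → ℝ) → ℝ} (hh : ContDiff ℝ (⊤ : ℕ∞) h)
    (v z : (Fin d → ℝ) × (Fin d → ℝ)) :
    dird v (langevin U σ h) z = langevin U σ (dird v h) z
      + ∑ j, (-(v.2 j) * pdx j h z + (fderiv ℝ (gradU U j) z.1 v.1 - v.2 j / σ) * pdy j h z) := by
  have dx : ∀ j, ContDiff ℝ (⊤ : ℕ∞) (pdx j h) := fun j => dird_smooth _ hh
  have dy : ∀ j, ContDiff ℝ (⊤ : ℕ∞) (pdy j h) := fun j => dird_smooth _ hh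
  have dyy : ∀ j, ContDiff ℝ (⊤ : ℕ∞) (pdy j (pdy j h)) := fun j => dird_smooth _ (dy j)
  have c1 : ∀ j, ContDiff ℝ (⊤ : ℕ∞) (fun w : (Fin d → ℝ) × (Fin d → ℝ) => -(w.2 j)) := by
    intro j; fun_prop
  have c2 : ∀ j, ContDiff ℝ (⊤ : ℕ∞)
      (fun w : (Fin d → ℝ) × (Fin d → ℝ) => gradU U j w.1 - w.2 j / σ) := by
    intro j
    have := gradU_smooth hU j
    exact (this.comp contDiff_fst).sub (by fun_prop)
  have hsnd : ∀ j, HasFDerivAt (fun w : (Fin d → ℝ) × (Fin d → ℝ) => w.2 j)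
      ((ContinuousLinearMap.proj (R := ℝ) (φ := fun _ : Fin d => ℝ) j).comp
        (ContinuousLinearMap.snd ℝ (Fin d → ℝ) (Fin d → ℝ))) z := fun j =>
    ((ContinuousLinearMap.proj (R := ℝ) (φ := fun _ : Fin d => ℝ) j).comp
        (ContinuousLinearMap.snd ℝ (Fin d → ℝ) (Fin d → ℝ))).hasFDerivAt
  have e1 : ∀ j, dird v (fun w : (Fin d → ℝ) × (Fin d → ℝ) => -(w.2 j)) z = -(v.2 j) := by
    intro j
    unfold dird
    rw [(hsnd j).fun_neg.fderiv]; simp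
  have e2 : ∀ j, dird v (fun w : (Fin d → ℝ) × (Fin d → ℝ) => gradU U j w.1 - w.2 j / σ) z
      = fderiv ℝ (gradU U j) z.1 v.1 - v.2 j / σ := by
    intro j
    have a := (smooth_diff (gradU_smooth hU j) z.1).hasFDerivAt.comp z
      (hasFDerivAt_fst (𝕜 := ℝ) (E := Fin d → ℝ) (F := Fin d → ℝ) (p := z))
    have b := a.fun_sub ((hsnd j).mul_const σ⁻¹)
    have e : (fun w : (Fin d → ℝ) × (Fin d → ℝ) => gradU U j w.1 - w.2 j / σ)
      = fun w : (Fin d → ℝ) × (Fin d → ℝ) => (gradU U j ∘ Prod.fst) w - w.2 j * σ⁻¹ := by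
        funext w; simp [div_eq_mul_inv]
    unfold dird
    rw [e, b.fderiv]
    simp [div_eq_mul_inv, mul_comm]
  have eL : langevin U σ h = fun z => ∑ i, (-(z.2 i) * pdx i h z
      + (gradU U i z.1 - z.2 i / σ) * pdy i h z + pdy i (pdy i h) z) :=
    funext fun z => langevin_eq U σ h z
  have s1 : ∀ j, Differentiable ℝ (fun w => -(w.2 j) * pdx j h w) := fun j =>
    smooth_diff ((c1 j).mul (dx j))
  have s2 : ∀ j, Differentiable ℝ (fun w => (gradU U j w.1 - w.2 j / σ) * pdy j h w) := fun j =>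
    smooth_diff ((c2 j).mul (dy j))
  rw [eL, dird_sum _ _ (fun j => ((s1 j).fun_add (s2 j)).fun_add (smooth_diff (dyy j))), langevin_eq,
    ← Finset.sum_add_distrib]
  refine Finset.sum_congr rfl fun j _ => ?_
  rw [dird_add v ((s1 j).fun_add (s2 j)) (smooth_diff (dyy j)), dird_add v (s1 j) (s2 j),
    dird_mul v (smooth_diff (c1 j)) (smooth_diff (dx j)),
    dird_mul v (smooth_diff (c2 j)) (smooth_diff (dy j)), e1, e2]
  have k1 : dird v (pdx j h) z = pdx j (dird v h) z := dird_comm _ _ hh z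
  have k2 : dird v (pdy j h) = pdy j (dird v h) := funext fun w => dird_comm _ _ hh w
  have k3 : dird v (pdy j (pdy j h)) z = pdy j (pdy j (dird v h)) z := by
    rw [← k2]; exact dird_comm _ _ (dy j) z
  rw [k1, k2, k3]
  ring

theorem pdx_langevin {U : (Fin d → ℝ) → ℝ} (hU : ContDiff ℝ (⊤ : ℕ∞) U) (σ : ℝ)
    {h : (Fin d → ℝ) × (Fin d → ℝ) → ℝ} (hh : ContDiff ℝ (⊤ : ℕ∞) h) (i : Fin d)
    (z : (Fin d → ℝ) × (Fin d → ℝ)) :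
    pdx i (langevin U σ h) z = langevin U σ (pdx i h) z + ∑ j, hessU U i j z.1 * pdy j h z := by
  rw [pdx_eq, dird_langevin hU σ hh]
  congr 1
  refine Finset.sum_congr rfl fun j _ => ?_
  simp only [Pi.zero_apply, neg_zero, zero_mul, zero_div, sub_zero, zero_add]
  rfl

theorem pdy_langevin {U : (Fin d → ℝ) → ℝ} (hU : ContDiff ℝ (⊤ : ℕ∞) U) (σ : ℝ)
    {h : (Fin d → ℝ) × (Fin d → ℝ) → ℝ} (hh : ContDiff ℝ (⊤ : ℕ∞) h) (i : Fin d)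
    (z : (Fin d → ℝ) × (Fin d → ℝ)) :
    pdy i (langevin U σ h) z = langevin U σ (pdy i h) z - pdx i h z - 1 / σ * pdy i h z := by
  rw [pdy_eq, dird_langevin hU σ hh]
  have : ∑ j, (-((Pi.single i (1:ℝ) : Fin d → ℝ) j) * pdx j h z
    + (fderiv ℝ (gradU U j) z.1 0 - (Pi.single i (1:ℝ) : Fin d → ℝ) j / σ) * pdy j h z)
      = - pdx i h z - 1 / σ * pdy i h z := by
    rw [Finset.sum_eq_single i]
    · simp; ring
    · intro j _ hj
      simp [Pi.single_eq_of_ne hj]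
    · simp
  rw [this]
  change _ = langevin U σ (dird (0, Pi.single i (1:ℝ)) h) z - _ - 1 / σ * pdy i h z
  ring

theorem bilin_bound (H : Fin d → Fin d → ℝ) (a b : Fin d → ℝ) (K : ℝ)
    (hK : Real.sqrt (∑ i, ∑ j, (H i j) ^ 2) ≤ K) :
    ∑ i, a i * ∑ j, H i j * b j ≤ K * ((∑ i, a i ^ 2) + ∑ i, b i ^ 2) := by
  have hA : 0 ≤ ∑ i, a i ^ 2 := Finset.sum_nonneg fun i _ => sq_nonneg _
  have hB : 0 ≤ ∑ i, b i ^ 2 := Finset.sum_nonneg fun i _ => sq_nonneg _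
  have hK0 : 0 ≤ K := (Real.sqrt_nonneg _).trans hK
  have h1 := Finset.sum_mul_sq_le_sq_mul_sq Finset.univ a (fun i => ∑ j, H i j * b j)
  have h2 : ∑ i, (∑ j, H i j * b j) ^ 2 ≤ (∑ i, ∑ j, (H i j) ^ 2) * ∑ j, b j ^ 2 := by
    rw [Finset.sum_mul]
    exact Finset.sum_le_sum fun i _ => Finset.sum_mul_sq_le_sq_mul_sq Finset.univ (H i) b
  have h3 : ∑ i, ∑ j, (H i j) ^ 2 ≤ K ^ 2 := (Real.sqrt_le_left hK0).1 hK
  refine le_of_abs_le (abs_le_of_sq_le_sq ?_ (by positivity))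
  calc _ ≤ (∑ i, a i ^ 2) * ∑ i, (∑ j, H i j * b j) ^ 2 := h1
    _ ≤ (∑ i, a i ^ 2) * (K ^ 2 * ∑ j, b j ^ 2) := by
      gcongr
      exact h2.trans (by gcongr)
    _ ≤ _ := by
      have : (∑ i, a i ^ 2) * (∑ j, b j ^ 2) ≤ ((∑ i, a i ^ 2) + ∑ i, b i ^ 2) ^ 2 := by
        nlinarith [mul_nonneg hA hB]
      nlinarith [mul_le_mul_of_nonneg_left this (sq_nonneg K)]

end helpers

/-- For the kinetic Langevin operator and the Fisher information functional
Φ₂(h) = |∇h|²/h (full gradient in the 2d variables), pointwise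
Γ_{L,Φ₂}(h) ≥ −(‖∇²U‖_∞ + 1 + 1/σ)|∇h|²/h for every smooth positive h. -/
theorem stmt7 {d : ℕ} (U : (Fin d → ℝ) → ℝ) (hU : ContDiff ℝ (⊤ : ℕ∞) U)
    (hK : BddAbove (Set.range fun x : Fin d → ℝ =>
      Real.sqrt (∑ i, ∑ j, (hessU U i j x) ^ 2)))
    (σ : ℝ) (hσ : 0 < σ)
    (h : (Fin d → ℝ) × (Fin d → ℝ) → ℝ) (hh : ContDiff ℝ (⊤ : ℕ∞) h)
    (hpos : ∀ z, 0 < h z)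
    (z : (Fin d → ℝ) × (Fin d → ℝ)) :
    (1 / 2) * (langevin U σ
        (fun w => ((∑ i, (pdx i h w) ^ 2) + ∑ i, (pdy i h w) ^ 2) / h w) z
      - (2 * ((∑ i, pdx i h z * pdx i (langevin U σ h) z)
            + ∑ i, pdy i h z * pdy i (langevin U σ h) z) / h z
        - ((∑ i, (pdx i h z) ^ 2) + ∑ i, (pdy i h z) ^ 2)
            * langevin U σ h z / (h z) ^ 2))
      ≥ -(hessNormInf U + 1 + 1 / σ)
          * ((∑ i, (pdx i h z) ^ 2) + ∑ i, (pdy i h z) ^ 2) / h z := by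
  have hK0 := le_ciSup hK z.1
  change Real.sqrt (∑ i, ∑ j, (hessU U i j z.1) ^ 2) ≤ hessNormInf U at hK0
  have hp := hpos z
  have dx : ∀ j, ContDiff ℝ (⊤ : ℕ∞) (pdx j h) := fun j => dird_smooth _ hh
  have dy : ∀ j, ContDiff ℝ (⊤ : ℕ∞) (pdy j h) := fun j => dird_smooth _ hh
  have hi : ContDiff ℝ (⊤ : ℕ∞) (fun w => (h w)⁻¹) := hh.inv fun w => (hpos w).ne'
  have qx : ∀ j, ContDiff ℝ (⊤ : ℕ∞) (fun w => (pdx j h w) ^ 2 * (h w)⁻¹) := fun j =>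
    ((dx j).pow 2).mul hi
  have qy : ∀ j, ContDiff ℝ (⊤ : ℕ∞) (fun w => (pdy j h w) ^ 2 * (h w)⁻¹) := fun j =>
    ((dy j).pow 2).mul hi
  have e : (fun w => ((∑ i, (pdx i h w) ^ 2) + ∑ i, (pdy i h w) ^ 2) / h w)
      = fun w => (∑ i, (pdx i h w) ^ 2 * (h w)⁻¹) + ∑ i, (pdy i h w) ^ 2 * (h w)⁻¹ := by
    funext w
    rw [div_eq_mul_inv, add_mul, Finset.sum_mul, Finset.sum_mul]
  rw [e, langevin_add U σ (ContDiff.sum fun i _ => qx i) (ContDiff.sum fun i _ => qy i),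
    langevin_sum U σ _ qx, langevin_sum U σ _ qy]
  have bx := Finset.sum_le_sum fun i (_ : i ∈ Finset.univ) => langevin_quot U σ (dx i) hh hpos z
  have hby := Finset.sum_le_sum fun i (_ : i ∈ Finset.univ) => langevin_quot U σ (dy i) hh hpos z
  simp only [pdx_langevin hU σ hh, pdy_langevin hU σ hh]
  simp only [Finset.sum_sub_distrib, ← Finset.mul_sum, ← Finset.sum_mul] at bx hby
  simp only [mul_add, mul_sub, Finset.sum_add_distrib, Finset.sum_sub_distrib]
  have hb := bilin_bound (fun i j => hessU U i j z.1) (fun i => pdx i h z) (fun i => pdy i h z)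
    (hessNormInf U) hK0
  have hc : -((∑ i, (pdx i h z) ^ 2) + ∑ i, (pdy i h z) ^ 2) ≤ ∑ i, pdy i h z * pdx i h z := by
    rw [← Finset.sum_add_distrib, ← Finset.sum_neg_distrib]
    exact Finset.sum_le_sum fun i _ => by
      nlinarith [sq_nonneg (pdy i h z + pdx i h z), sq_nonneg (pdy i h z), sq_nonneg (pdx i h z)]
  have hs : ∑ i, pdy i h z * (1 / σ * pdy i h z) = 1 / σ * ∑ i, (pdy i h z) ^ 2 := by
    rw [Finset.mul_sum]; exact Finset.sum_congr rfl fun i _ => by ring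
  have hA : 0 ≤ ∑ i, (pdx i h z) ^ 2 := Finset.sum_nonneg fun i _ => sq_nonneg _
  have hB : 0 ≤ ∑ i, (pdy i h z) ^ 2 := Finset.sum_nonneg fun i _ => sq_nonneg _
  rw [hs]
  simp only [div_eq_mul_inv, one_mul, ← inv_pow] at *
  generalize (∑ i, langevin U σ (fun w => (pdx i h w) ^ 2 * (h w)⁻¹) z) = LX at *
  generalize (∑ i, langevin U σ (fun w => (pdy i h w) ^ 2 * (h w)⁻¹) z) = LY at *
  generalize (∑ i, pdx i h z * langevin U σ (pdx i h) z) = P at *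
  generalize (∑ i, pdy i h z * langevin U σ (pdy i h) z) = Q at *
  generalize (∑ i, pdx i h z * ∑ j, hessU U i j z.1 * pdy j h z) = R at *
  generalize (∑ i, pdy i h z * pdx i h z) = S at *
  generalize (∑ i, (pdx i h z) ^ 2) = A at *
  generalize (∑ i, (pdy i h z) ^ 2) = B at *
  generalize langevin U σ h z = M at *
  generalize hessNormInf U = K at *
  have hr : 0 < (h z)⁻¹ := inv_pos.2 hp
  have hσ' : 0 < σ⁻¹ := inv_pos.2 hσ
  generalize (h z)⁻¹ = r at *
  generalize σ⁻¹ = s at *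
  have h0 : 0 ≤ (K * (A + B) - R + (S + (A + B)) + s * A + 2 * (s * B)) * r := by
    have := mul_nonneg hσ'.le hA
    have := mul_nonneg hσ'.le hB
    apply mul_nonneg _ hr.le
    linarith
  nlinarith [h0, bx, hby]
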